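/- Let E = EuclideanSpace ℝ (Fin n), let J : E → ℝ be twice continuously differentiable at s*, let c > 0 and s₀ ∈ E, and suppose s* is a local minimum of the function s ↦ J(s) + (c/2) * ‖s − s₀‖². Then for every v ∈ E, iteratedFDeriv ℝ 2 J s* ![v, v] ≥ −c * ‖v‖². -/

import Mathlib

/-!
Restricting to the line `t ↦ sstar + t • v` reduces the claim to one variable, where the second
derivative at a local minimum is nonnegative (`IsLocalMin.deriv_deriv_nonneg_real`). The second
derivative at `0` of the penalized objective along this line is the Hessian form of `J` at `(v, v)`
plus `c * ‖v‖ ^ 2`.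
-/

/-- If the second derivative were negative, the second derivative test would make `a` a local
maximum as well, so `g` would be constant near `a` and its second derivative would vanish. -/
lemma IsLocalMin.deriv_deriv_nonneg_real {g : ℝ → ℝ} {a : ℝ} (h : IsLocalMin g a)
    (hc : ContinuousAt g a) : 0 ≤ deriv (deriv g) a := by
  by_contra! hneg
  have hmax := isLocalMax_of_deriv_deriv_neg hneg h.deriv_eq_zero hc
  have heq : g =ᶠ[nhds a] fun _ => g a := by
    filter_upwards [h, hmax] with t h1 h2 using le_antisymm h2 h1
  have h0 := heq.deriv.deriv_eq
  simp at h0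
  linarith

/-- Proposition 1 instantiated with the standard distance function
`D(s) = (c/2)‖s - s₀‖²`: at a local minimum `s*` of `s ↦ J s + (c/2)‖s - s₀‖²`,
the Hessian quadratic form of `J` is bounded below by `-c‖v‖²`. -/
theorem curvature_lower_bound_quadratic_penalty
    {n : ℕ} (J : EuclideanSpace ℝ (Fin n) → ℝ)
    (sstar s₀ : EuclideanSpace ℝ (Fin n)) (c : ℝ) (hc : c > 0)
    (hJ : ContDiffAt ℝ 2 J sstar)
    (hmin : IsLocalMin (fun s => J s + (c / 2) * ‖s - s₀‖ ^ 2) sstar) :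
    ∀ v : EuclideanSpace ℝ (Fin n),
      iteratedFDeriv ℝ 2 J sstar ![v, v] ≥ -c * ‖v‖ ^ 2 := by
  intro v
  have hline : ∀ t : ℝ, HasDerivAt (fun t : ℝ => sstar + t • v) v t := fun t => by
    simpa using ((hasDerivAt_id t).smul_const v).const_add sstar
  have htend : Filter.Tendsto (fun t : ℝ => sstar + t • v) (nhds 0) (nhds sstar) := by
    simpa using (hline 0).continuousAt.tendsto
  set g : ℝ → ℝ := fun t => J (sstar + t • v) + (c / 2) * ‖sstar + t • v - s₀‖ ^ 2 with hg
  have hgmin : IsLocalMin g 0 := by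
    filter_upwards [htend.eventually hmin] with t ht
    simpa [hg] using ht
  have hdiff : ∀ᶠ s in nhds sstar, DifferentiableAt ℝ J s :=
    (hJ.eventually (by simp)).mono fun s hs => hs.differentiableAt (by simp)
  have hg1 : ∀ᶠ t in nhds (0 : ℝ), HasDerivAt g
      (fderiv ℝ J (sstar + t • v) v + c * inner ℝ (sstar + t • v - s₀) v) t := by
    filter_upwards [htend.eventually hdiff] with t ht
    have h1 : HasDerivAt (fun t : ℝ => J (sstar + t • v)) (fderiv ℝ J (sstar + t • v) v) t :=
      ht.hasFDerivAt.comp_hasDerivAt t (hline t)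
    have h2 : HasDerivAt (fun t : ℝ => (c / 2) * ‖sstar + t • v - s₀‖ ^ 2)
        ((c / 2) * (2 * inner ℝ (sstar + t • v - s₀) v)) t :=
      (((hline t).sub_const s₀).norm_sq).const_mul (c / 2)
    refine (h1.add h2).congr_deriv ?_
    ring
  have hfd : DifferentiableAt ℝ (fderiv ℝ J) sstar :=
    (hJ.fderiv_right (m := 1) (by norm_num)).differentiableAt (by simp)
  have hg2 : HasDerivAt
      (fun t : ℝ => fderiv ℝ J (sstar + t • v) v + c * inner ℝ (sstar + t • v - s₀) v)
      (fderiv ℝ (fderiv ℝ J) sstar v v + c * ‖v‖ ^ 2) 0 := by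
    have h0 : HasFDerivAt (fderiv ℝ J) (fderiv ℝ (fderiv ℝ J) sstar) (sstar + (0 : ℝ) • v) := by
      simpa using hfd.hasFDerivAt
    have h1 : HasDerivAt (fun t : ℝ => fderiv ℝ J (sstar + t • v))
        (fderiv ℝ (fderiv ℝ J) sstar v) 0 :=
      HasFDerivAt.comp_hasDerivAt (f := fun t : ℝ => sstar + t • v) (0 : ℝ) h0 (hline 0)
    have h2 : HasDerivAt (fun t : ℝ => fderiv ℝ J (sstar + t • v) v)
        (fderiv ℝ (fderiv ℝ J) sstar v v) 0 := by
      simpa using h1.clm_apply (hasDerivAt_const (0 : ℝ) v)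
    have h3 : HasDerivAt (fun t : ℝ => inner ℝ (sstar + t • v - s₀) v) (‖v‖ ^ 2) 0 := by
      refine (((hline 0).sub_const s₀).inner ℝ (hasDerivAt_const (0 : ℝ) v)).congr_deriv ?_
      rw [inner_zero_right, zero_add, real_inner_self_eq_norm_sq]
    exact h2.add (h3.const_mul c)
  have hdd : deriv (deriv g) 0 = fderiv ℝ (fderiv ℝ J) sstar v v + c * ‖v‖ ^ 2 := by
    have he : deriv g =ᶠ[nhds 0] _ := hg1.mono fun t ht => ht.deriv
    rw [he.deriv_eq, hg2.deriv]
  have hnn := hgmin.deriv_deriv_nonneg_real hg1.self_of_nhds.continuousAt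
  rw [hdd] at hnn
  rw [iteratedFDeriv_two_apply]
  simp only [Matrix.cons_val_zero, Matrix.cons_val_one]
  linarith
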